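/- Suppose each ψ_k is 1-Lipschitz and S_N = {z_1,…,z_N} ⊆ X is an ε-net of X (every x ∈ X is within distance ε of some z_j). Then the discretized relaxed problem is sandwiched between the original problem at radii η and η + ε: sup_{P_0 ∈ 𝒫_0^η, P_1 ∈ 𝒫_1^η} (1 − TV(P_0, P_1)) ≤ sup_{P_0 ∈ 𝒫^{η+ε}_{0,N}, P_1 ∈ 𝒫^{η+ε}_{1,N}} (1 − TV(P_0, P_1)) ≤ sup_{P_0 ∈ 𝒫_0^{η+ε}, P_1 ∈ 𝒫_1^{η+ε}} (1 − TV(P_0, P_1)). -/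

import Mathlib

open MeasureTheory

/-- The total variation distance between two measures:
`TV(P, Q) = sup over measurable sets A of |P(A) − Q(A)|`. -/
noncomputable def tv {Ω : Type*} [MeasurableSpace Ω] (P Q : Measure Ω) : ℝ :=
  ⨆ A : {A : Set Ω // MeasurableSet A}, |(P A.1).toReal - (Q A.1).toReal|

/-- The moment-constrained uncertainty set around nominal `Qhat` with radius `θ`. -/
def momentSet {d : ℕ} (X : Set (EuclideanSpace ℝ (Fin d))) {K : ℕ}
    (ψ : Fin K → X → ℝ) (Qhat : ProbabilityMeasure X) (θ : ℝ) :
    Set (ProbabilityMeasure X) :=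
  {P | ∀ k, |∫ x, ψ k x ∂(P : Measure X) - ∫ x, ψ k x ∂(Qhat : Measure X)| ≤ θ}

/-- The relaxed discretized uncertainty set: members of the moment-constrained set of
radius `η + ε` that are supported on the finite set `{z_1,…,z_N}`. -/
def momentSetDiscrete {d : ℕ} (X : Set (EuclideanSpace ℝ (Fin d))) {K : ℕ}
    (ψ : Fin K → X → ℝ) (Qhat : ProbabilityMeasure X) (θ : ℝ)
    {N : ℕ} (z : Fin N → X) : Set (ProbabilityMeasure X) :=
  {P | (P : Measure X) (Set.range z)ᶜ = 0 ∧ P ∈ momentSet X ψ Qhat θ}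

/-- A finite `ε`-net of a metric space admits a measurable choice of an `ε`-close net point. -/
lemma exists_measurable_index_of_net {α : Type*} [PseudoMetricSpace α] [MeasurableSpace α]
    [OpensMeasurableSpace α] {N : ℕ} (z : Fin N → α) {ε : ℝ}
    (hnet : ∀ x, ∃ j, dist x (z j) ≤ ε) :
    ∃ f : α → Fin N, Measurable f ∧ ∀ x, dist x (z (f x)) ≤ ε := by
  classical
  have hp : ∀ x, ∃ n, ∃ h : n < N, dist x (z ⟨n, h⟩) ≤ ε := fun x =>
    let ⟨j, hj⟩ := hnet x
    ⟨j, j.2, hj⟩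
  have hmeas : Measurable fun x => Nat.find (hp x) := by
    refine measurable_find hp fun n => ?_
    by_cases h : n < N
    · simpa [h] using (isClosed_le (continuous_id.dist continuous_const)
        continuous_const : IsClosed {x : α | dist x (z ⟨n, h⟩) ≤ ε}).measurableSet
    · simp [h]
  refine ⟨fun x => ⟨Nat.find (hp x), (Nat.find_spec (hp x)).1⟩, ?_,
    fun x => (Nat.find_spec (hp x)).2⟩
  refine measurable_to_countable' fun j => ?_
  convert hmeas (measurableSet_singleton (j : ℕ)) using 1
  ext x
  simp [Fin.ext_iff]

lemma tv_nonneg {Ω : Type*} [MeasurableSpace Ω] (P Q : Measure Ω) : 0 ≤ tv P Q :=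
  Real.iSup_nonneg fun _ => abs_nonneg _

lemma bddAbove_range_abs_measure_sub {Ω : Type*} [MeasurableSpace Ω] (P Q : Measure Ω)
    [IsProbabilityMeasure P] [IsProbabilityMeasure Q] :
    BddAbove (Set.range fun A : {A : Set Ω // MeasurableSet A} =>
      |(P A.1).toReal - (Q A.1).toReal|) := by
  refine ⟨1, ?_⟩
  rintro _ ⟨A, rfl⟩
  have hP : (P A.1).toReal ≤ 1 := measureReal_le_one
  have hQ : (Q A.1).toReal ≤ 1 := measureReal_le_one
  have hP' : 0 ≤ (P A.1).toReal := ENNReal.toReal_nonneg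
  have hQ' : 0 ≤ (Q A.1).toReal := ENNReal.toReal_nonneg
  exact abs_le.2 ⟨by linarith, by linarith⟩

/-- Data processing: pushing forward does not increase total variation. -/
lemma tv_map_le {Ω Ω' : Type*} [MeasurableSpace Ω] [MeasurableSpace Ω'] (P Q : Measure Ω)
    [IsProbabilityMeasure P] [IsProbabilityMeasure Q] {T : Ω → Ω'} (hT : Measurable T) :
    tv (P.map T) (Q.map T) ≤ tv P Q := by
  have : Nonempty {A : Set Ω' // MeasurableSet A} := ⟨⟨∅, MeasurableSet.empty⟩⟩
  refine ciSup_le fun A => ?_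
  rw [Measure.map_apply hT A.2, Measure.map_apply hT A.2]
  exact le_ciSup (bddAbove_range_abs_measure_sub P Q) ⟨T ⁻¹' A.1, hT A.2⟩

/-- Moving mass by a map whose range lies in `{z_1,…,z_N}` and which changes each moment function
by at most `ε` sends the moment set of radius `η` into the discretized one of radius `η + ε`. -/
lemma map_mem_momentSetDiscrete {d : ℕ} {X : Set (EuclideanSpace ℝ (Fin d))} (hX : IsCompact X)
    {K : ℕ} {ψ : Fin K → X → ℝ} (hψ : ∀ k, Continuous (ψ k)) {Q P : ProbabilityMeasure X}
    {η ε : ℝ} {N : ℕ} {z : Fin N → X} {T : X → X} (hT : Measurable T)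
    (hTz : ∀ x, T x ∈ Set.range z) (hTψ : ∀ k x, |ψ k (T x) - ψ k x| ≤ ε)
    (hP : P ∈ momentSet X ψ Q η) :
    P.map hT.aemeasurable ∈ momentSetDiscrete X ψ Q (η + ε) z := by
  have : CompactSpace X := isCompact_iff_compactSpace.mp hX
  refine ⟨?_, fun k => ?_⟩
  · rw [ProbabilityMeasure.toMeasure_map,
      Measure.map_apply hT (Set.finite_range z).measurableSet.compl]
    convert measure_empty (μ := (P : Measure X))
    ext x
    simpa using hTz x
  · have hint : Integrable (ψ k) (P : Measure X) :=
      (hψ k).integrable_of_hasCompactSupport (HasCompactSupport.of_compactSpace _)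
    have hintm : Integrable (ψ k) ((P : Measure X).map T) := by
      have := Measure.isProbabilityMeasure_map (μ := (P : Measure X)) hT.aemeasurable
      exact (hψ k).integrable_of_hasCompactSupport (HasCompactSupport.of_compactSpace _)
    have hintT : Integrable (fun x => ψ k (T x)) (P : Measure X) := hintm.comp_measurable hT
    have hclose : |∫ x, ψ k (T x) ∂(P : Measure X) - ∫ x, ψ k x ∂(P : Measure X)| ≤ ε := by
      rw [← integral_sub hintT hint]
      simpa using norm_integral_le_of_norm_le_const (μ := (P : Measure X))
        (f := fun x => ψ k (T x) - ψ k x) (Filter.Eventually.of_forall (hTψ k))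
    rw [ProbabilityMeasure.toMeasure_map,
      integral_map hT.aemeasurable (hψ k).aestronglyMeasurable]
    have := abs_sub_le (∫ x, ψ k (T x) ∂(P : Measure X)) (∫ x, ψ k x ∂(P : Measure X))
      (∫ x, ψ k x ∂(Q : Measure X))
    linarith [hP k]

/-- The set of affinities over any family of pairs is bounded above by `1`. -/
lemma bddAbove_one_sub_tv {Ω : Type*} [MeasurableSpace Ω] (S₀ S₁ : Set (ProbabilityMeasure Ω)) :
    BddAbove {r : ℝ | ∃ P0 ∈ S₀, ∃ P1 ∈ S₁, r = 1 - tv (P0 : Measure Ω) (P1 : Measure Ω)} := by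
  refine ⟨1, ?_⟩
  rintro _ ⟨P0, -, P1, -, rfl⟩
  linarith [tv_nonneg (P0 : Measure Ω) (P1 : Measure Ω)]

/-- With `1`-Lipschitz moment functions and an `ε`-net
`S_N = {z_1,…,z_N}` of `X`, the discretized relaxed worst-case affinity is sandwiched
between the worst-case affinities at radii `η` and `η + ε`. -/
theorem discretized_relaxation_sandwich
    {d : ℕ} (X : Set (EuclideanSpace ℝ (Fin d))) (hX : IsCompact X)
    {K : ℕ} (ψ : Fin K → X → ℝ) (hψ : ∀ k, Continuous (ψ k))
    (hLip : ∀ k, ∀ x y : X, |ψ k x - ψ k y| ≤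
      ‖(x : EuclideanSpace ℝ (Fin d)) - (y : EuclideanSpace ℝ (Fin d))‖)
    (Q0 Q1 : ProbabilityMeasure X) (η ε : ℝ) (hη : 0 < η) (hε : 0 ≤ ε)
    {N : ℕ} (z : Fin N → X)
    (hnet : ∀ x : X, ∃ j, ‖(x : EuclideanSpace ℝ (Fin d)) - (z j : EuclideanSpace ℝ (Fin d))‖ ≤ ε) :
    sSup {r : ℝ | ∃ P0 ∈ momentSet X ψ Q0 η, ∃ P1 ∈ momentSet X ψ Q1 η,
        r = 1 - tv (P0 : Measure X) (P1 : Measure X)} ≤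
      sSup {r : ℝ | ∃ P0 ∈ momentSetDiscrete X ψ Q0 (η + ε) z,
        ∃ P1 ∈ momentSetDiscrete X ψ Q1 (η + ε) z,
        r = 1 - tv (P0 : Measure X) (P1 : Measure X)} ∧
    sSup {r : ℝ | ∃ P0 ∈ momentSetDiscrete X ψ Q0 (η + ε) z,
        ∃ P1 ∈ momentSetDiscrete X ψ Q1 (η + ε) z,
        r = 1 - tv (P0 : Measure X) (P1 : Measure X)} ≤
      sSup {r : ℝ | ∃ P0 ∈ momentSet X ψ Q0 (η + ε), ∃ P1 ∈ momentSet X ψ Q1 (η + ε),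
        r = 1 - tv (P0 : Measure X) (P1 : Measure X)} := by
  obtain ⟨f, hf, hfz⟩ := exists_measurable_index_of_net z (ε := ε) fun x => by
    simpa [Subtype.dist_eq, dist_eq_norm] using hnet x
  have hT : Measurable fun x => z (f x) := (measurable_of_countable z).comp hf
  have hTψ : ∀ k x, |ψ k (z (f x)) - ψ k x| ≤ ε := fun k x => by
    rw [abs_sub_comm]
    refine (hLip k x (z (f x))).trans ?_
    simpa [Subtype.dist_eq, dist_eq_norm] using hfz x
  have hmem : ∀ {Q P : ProbabilityMeasure X}, P ∈ momentSet X ψ Q η →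
      P.map hT.aemeasurable ∈ momentSetDiscrete X ψ Q (η + ε) z := fun hP =>
    map_mem_momentSetDiscrete hX hψ hT (fun x => ⟨f x, rfl⟩) hTψ hP
  have hself : ∀ Q : ProbabilityMeasure X, Q ∈ momentSet X ψ Q η := fun Q k => by
    simpa using hη.le
  constructor
  · refine csSup_le ⟨_, Q0, hself Q0, Q1, hself Q1, rfl⟩ ?_
    rintro _ ⟨P0, h0, P1, h1, rfl⟩
    refine le_csSup_of_le (bddAbove_one_sub_tv _ _) ⟨_, hmem h0, _, hmem h1, rfl⟩ ?_
    simpa only [ProbabilityMeasure.toMeasure_map] using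
      sub_le_sub_left (tv_map_le (P0 : Measure X) (P1 : Measure X) hT) 1
  · refine csSup_le_csSup (bddAbove_one_sub_tv _ _)
      ⟨_, _, hmem (hself Q0), _, hmem (hself Q1), rfl⟩ ?_
    rintro _ ⟨P0, h0, P1, h1, rfl⟩
    exact ⟨P0, h0.2, P1, h1.2, rfl⟩
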